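/- Let α > β > 0 and let r > −1/2. There exists a constant C > 0 (depending on r, α, β) such that for every t with 0 < t ≤ 1 one has ( ∫_ℝ |ξ|^{2r} · e^{−2(|ξ|^α − |ξ|^β)·t} dξ )^{1/2} ≤ C · t^{−r/α − 1/(2α)}. -/

import Mathlib

/-!
Since `β < α`, the growing factor `e^{2 t x^β}` is absorbed by half of the dissipation up to a
constant: `x^β ≤ x^α / 2 + M` for all `x > 0`, so for `t ≤ 1` the exponential is at most
`e^{2M} e^{-t x^α}`. What remains is the Gamma integral
`∫₀^∞ x^{2r} e^{-t x^α} dx = t^{-(2r+1)/α} Γ((2r+1)/α) / α`, which converges because `2r > -1`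
and whose square root has the claimed scaling in `t`.
-/

open Real MeasureTheory

/-- Absorption of the lower-order power: beyond the threshold `x = 2^{1/(α-β)}`, where
`x^{α-β} = 2`, half of `x^α` dominates `x^β`; below it, `x^β` is bounded. -/
lemma rpow_le_half_rpow_add {α β x : ℝ} (hβ : 0 < β) (hαβ : β < α) (hx : 0 < x) :
    x ^ β ≤ x ^ α / 2 + ((2 : ℝ) ^ (1 / (α - β))) ^ β := by
  have hd : 0 < α - β := sub_pos.mpr hαβ
  rcases le_total x ((2 : ℝ) ^ (1 / (α - β))) with h | h
  · have h1 := Real.rpow_le_rpow hx.le h hβ.le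
    have h2 : 0 ≤ x ^ α := by positivity
    linarith
  · have h1 := Real.rpow_le_rpow (by positivity) h hd.le
    rw [← Real.rpow_mul (by norm_num), one_div_mul_cancel hd.ne', Real.rpow_one] at h1
    have h2 : x ^ α = x ^ (α - β) * x ^ β := by
      rw [← Real.rpow_add hx]; ring_nf
    have h3 : 0 < x ^ β := by positivity
    have h4 : 0 ≤ ((2 : ℝ) ^ (1 / (α - β))) ^ β := by positivity
    nlinarith

/-- Weighted `L²` kernel estimate: for `α > β > 0` and `r > −1/2` there is `C > 0` such that
for all `0 < t ≤ 1`,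
`(∫ |ξ|^{2r} e^{−2(|ξ|^α − |ξ|^β)t} dξ)^{1/2} ≤ C t^{−r/α − 1/(2α)}`. -/
theorem kernel_weighted_L2_bound
    (α β r : ℝ) (hβ : 0 < β) (hαβ : β < α) (hr : -1 / 2 < r) :
    ∃ C > 0, ∀ t : ℝ, 0 < t → t ≤ 1 →
      (∫ ξ : ℝ, |ξ| ^ (2 * r) * Real.exp (-2 * (|ξ| ^ α - |ξ| ^ β) * t)) ^ ((1 : ℝ) / 2) ≤
        C * t ^ (-(r / α) - 1 / (2 * α)) := by
  have hα : 0 < α := hβ.trans hαβ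
  have h2r : -1 < 2 * r := by linarith
  set M : ℝ := ((2 : ℝ) ^ (1 / (α - β))) ^ β with hM
  have hM0 : 0 ≤ M := by positivity
  have hG : 0 < Real.Gamma ((2 * r + 1) / α) :=
    Real.Gamma_pos_of_pos (div_pos (by linarith) hα)
  set A : ℝ := 2 * (Real.exp (2 * M) * (1 / α * Real.Gamma ((2 * r + 1) / α))) with hA
  have hA0 : 0 < A := by positivity
  refine ⟨A ^ ((1 : ℝ) / 2), by positivity, fun t ht ht1 => ?_⟩
  have key : (∫ ξ : ℝ, |ξ| ^ (2 * r) * Real.exp (-2 * (|ξ| ^ α - |ξ| ^ β) * t)) ≤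
      A * t ^ (-(2 * r + 1) / α) := by
    rw [integral_comp_abs (f := fun x : ℝ => x ^ (2 * r) * Real.exp (-2 * (x ^ α - x ^ β) * t))]
    have hmono : (∫ x in Set.Ioi (0 : ℝ), x ^ (2 * r) * Real.exp (-2 * (x ^ α - x ^ β) * t)) ≤
        ∫ x in Set.Ioi (0 : ℝ), Real.exp (2 * M) * (x ^ (2 * r) * Real.exp (-t * x ^ α)) := by
      refine integral_mono_of_nonneg ?_
        ((integrableOn_rpow_mul_exp_neg_mul_rpow h2r hα ht).const_mul _) ?_
      · filter_upwards [ae_restrict_mem measurableSet_Ioi] with x hx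
        have hx : 0 < x := hx
        positivity
      · filter_upwards [ae_restrict_mem measurableSet_Ioi] with x hx
        have hx : 0 < x := hx
        have hexp : Real.exp (-2 * (x ^ α - x ^ β) * t) ≤
            Real.exp (2 * M) * Real.exp (-t * x ^ α) := by
          rw [← Real.exp_add, Real.exp_le_exp]
          have h1 := mul_le_mul_of_nonneg_right (rpow_le_half_rpow_add hβ hαβ hx) ht.le
          have h2 := mul_le_mul_of_nonneg_left ht1 hM0
          nlinarith
        calc _ ≤ x ^ (2 * r) * (Real.exp (2 * M) * Real.exp (-t * x ^ α)) := by gcongr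
          _ = _ := by ring
    rw [integral_const_mul, integral_rpow_mul_exp_neg_mul_rpow hα h2r ht] at hmono
    calc _ ≤ _ := mul_le_mul_of_nonneg_left hmono zero_le_two
      _ = _ := by rw [hA]; ring
  calc _ ≤ (A * t ^ (-(2 * r + 1) / α)) ^ ((1 : ℝ) / 2) :=
        Real.rpow_le_rpow (integral_nonneg fun ξ => by positivity) key (by norm_num)
    _ = _ := by
        rw [Real.mul_rpow hA0.le (by positivity), ← Real.rpow_mul ht.le]
        congr 2
        field_simp
        ring
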